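/- arXiv:2006.07451 — 3 statements merged into one kernel-verified Lean document; each statement's English description precedes it below -/
import Mathlib

section
/- Let F, W be n×n real symmetric positive-definite matrices and R a p×p real symmetric positive-definite matrix, and suppose the Loewner-order bounds λ_min(R⁻¹)·W ⪯ F ⪯ λ_max(R⁻¹)·W hold. Then max{1, κ(W)/κ(R)} ≤ κ(F) ≤ κ(R)·κ(W), where κ(A) = λ_max(A)/λ_min(A) denotes the condition number of a symmetric positive-definite matrix A. -/
open Matrix

/-- The largest eigenvalue of a real symmetric (Hermitian) matrix. -/
noncomputable def eigMax {n : ℕ} {A : Matrix (Fin n) (Fin n) ℝ} (hA : A.IsHermitian) : ℝ :=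
  ⨆ i, hA.eigenvalues i

/-- The smallest eigenvalue of a real symmetric (Hermitian) matrix. -/
noncomputable def eigMin {n : ℕ} {A : Matrix (Fin n) (Fin n) ℝ} (hA : A.IsHermitian) : ℝ :=
  ⨅ i, hA.eigenvalues i

/-- The condition number `κ(A) = λ_max(A)/λ_min(A)` of a symmetric positive-definite matrix. -/
noncomputable def condNum {n : ℕ} {A : Matrix (Fin n) (Fin n) ℝ} (hA : A.PosDef) : ℝ :=
  eigMax hA.1 / eigMin hA.1

open scoped MatrixOrder

section

variable {n : ℕ} {A B : Matrix (Fin n) (Fin n) ℝ}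

theorem isGreatest_eigMax [NeZero n] (hA : A.IsHermitian) :
    IsGreatest (spectrum ℝ A) (eigMax hA) := by
  rw [hA.spectrum_real_eq_range_eigenvalues]
  refine ⟨exists_eq_ciSup_of_finite, ?_⟩
  rintro _ ⟨i, rfl⟩
  exact le_ciSup (Set.finite_range _).bddAbove i

theorem isLeast_eigMin [NeZero n] (hA : A.IsHermitian) :
    IsLeast (spectrum ℝ A) (eigMin hA) := by
  rw [hA.spectrum_real_eq_range_eigenvalues]
  refine ⟨exists_eq_ciInf_of_finite, ?_⟩
  rintro _ ⟨i, rfl⟩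
  exact ciInf_le (Set.finite_range _).bddBelow i

theorem eigMax_le_iff [NeZero n] (hA : A.IsHermitian) {c : ℝ} :
    eigMax hA ≤ c ↔ A ≤ c • 1 := by
  rw [isLUB_le_iff (isGreatest_eigMax hA).isLUB, ← Algebra.algebraMap_eq_smul_one,
    le_algebraMap_iff_spectrum_le hA.isSelfAdjoint]
  rfl

theorem le_eigMin_iff [NeZero n] (hA : A.IsHermitian) {c : ℝ} :
    c ≤ eigMin hA ↔ c • 1 ≤ A := by
  rw [le_isGLB_iff (isLeast_eigMin hA).isGLB, ← Algebra.algebraMap_eq_smul_one,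
    algebraMap_le_iff_le_spectrum hA.isSelfAdjoint]
  rfl

theorem eigMin_le_eigMax [NeZero n] (hA : A.IsHermitian) : eigMin hA ≤ eigMax hA :=
  (isLeast_eigMin hA).2 (isGreatest_eigMax hA).1

theorem eigMin_pos [NeZero n] (hA : A.PosDef) : 0 < eigMin hA.1 := by
  obtain ⟨i, hi⟩ := exists_eq_ciInf_of_finite (f := hA.1.eigenvalues)
  exact (hA.eigenvalues_pos i).trans_eq hi

theorem eigMax_pos [NeZero n] (hA : A.PosDef) : 0 < eigMax hA.1 :=
  (eigMin_pos hA).trans_le (eigMin_le_eigMax hA.1)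

theorem eigMax_le_mul_eigMax [NeZero n] (hA : A.IsHermitian) (hB : B.IsHermitian) {c : ℝ}
    (hc : 0 ≤ c) (h : A ≤ c • B) : eigMax hA ≤ c * eigMax hB := by
  rw [eigMax_le_iff, mul_smul]
  refine h.trans ?_
  rw [Matrix.le_iff, ← smul_sub]
  exact ((eigMax_le_iff hB).1 le_rfl).smul hc

theorem mul_eigMin_le_eigMin [NeZero n] (hA : A.IsHermitian) (hB : B.IsHermitian) {c : ℝ}
    (hc : 0 ≤ c) (h : c • B ≤ A) : c * eigMin hB ≤ eigMin hA := by
  rw [le_eigMin_iff, mul_smul]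
  refine le_trans ?_ h
  rw [Matrix.le_iff, ← smul_sub]
  exact ((le_eigMin_iff hB).1 le_rfl).smul hc

theorem spectrum_inv_of_posDef (hA : A.PosDef) : spectrum ℝ A⁻¹ = (spectrum ℝ A)⁻¹ := by
  obtain ⟨u, rfl⟩ := hA.isUnit
  rw [spectrum.map_inv, Matrix.coe_units_inv]

theorem eigMax_inv [NeZero n] (hA : A.PosDef) : eigMax hA.inv.1 = (eigMin hA.1)⁻¹ := by
  refine (isGreatest_eigMax hA.inv.1).unique ?_
  rw [spectrum_inv_of_posDef hA]
  refine ⟨Set.inv_mem_inv.2 (isLeast_eigMin hA.1).1, fun x hx => ?_⟩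
  exact le_inv_of_le_inv₀ (eigMin_pos hA) ((isLeast_eigMin hA.1).2 hx)

theorem eigMin_inv [NeZero n] (hA : A.PosDef) : eigMin hA.inv.1 = (eigMax hA.1)⁻¹ := by
  rw [← _root_.inv_inj, inv_inv, ← eigMax_inv hA.inv]
  simp only [Matrix.nonsing_inv_nonsing_inv A ((Matrix.isUnit_iff_isUnit_det A).1 hA.isUnit)]

theorem condNum_inv [NeZero n] (hA : A.PosDef) : condNum hA.inv = condNum hA := by
  rw [condNum, eigMax_inv hA, eigMin_inv hA, inv_div_inv, condNum]

theorem condNum_pos [NeZero n] (hA : A.PosDef) : 0 < condNum hA :=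
  div_pos (eigMax_pos hA) (eigMin_pos hA)

theorem one_le_condNum [NeZero n] (hA : A.PosDef) : 1 ≤ condNum hA :=
  (one_le_div (eigMin_pos hA)).2 (eigMin_le_eigMax hA.1)

theorem condNum_le_of_smul_le_of_le_smul [NeZero n] (hA : A.PosDef) (hB : B.PosDef) {a b : ℝ}
    (ha : 0 < a) (hb : 0 < b) (hlow : a • B ≤ A) (hhigh : A ≤ b • B) :
    condNum hA ≤ b / a * condNum hB := by
  rw [condNum, condNum, div_mul_div_comm]
  exact div_le_div₀ (mul_pos hb (eigMax_pos hB)).le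
    (eigMax_le_mul_eigMax hA.1 hB.1 hb.le hhigh) (mul_pos ha (eigMin_pos hB))
    (mul_eigMin_le_eigMin hA.1 hB.1 ha.le hlow)

theorem le_inv_smul_of_smul_le {c : ℝ} (hc : 0 < c) (h : c • A ≤ B) : A ≤ c⁻¹ • B := by
  have h' := Matrix.PosSemidef.smul (Matrix.le_iff.1 h) (inv_pos.2 hc).le
  rwa [smul_sub, inv_smul_smul₀ hc.ne'] at h'

theorem inv_smul_le_of_le_smul {c : ℝ} (hc : 0 < c) (h : A ≤ c • B) : c⁻¹ • A ≤ B := by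
  have h' := Matrix.PosSemidef.smul (Matrix.le_iff.1 h) (inv_pos.2 hc).le
  rwa [smul_sub, inv_smul_smul₀ hc.ne'] at h'

end

/-- (Corollary `fishercond`.)  If `F, W` are symmetric positive definite and
`λ_min(R⁻¹)·W ⪯ F ⪯ λ_max(R⁻¹)·W` in the Loewner order for a symmetric positive-definite `R`,
then `max{1, κ(W)/κ(R)} ≤ κ(F) ≤ κ(R)·κ(W)`. -/
theorem condNum_bounds_of_loewner_sandwich
    {n p : ℕ} (hn : 0 < n) (hp : 0 < p)
    (F W : Matrix (Fin n) (Fin n) ℝ) (R : Matrix (Fin p) (Fin p) ℝ)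
    (hF : F.PosDef) (hW : W.PosDef) (hR : R.PosDef)
    (hlow : (F - eigMin hR.inv.1 • W).PosSemidef)
    (hhigh : (eigMax hR.inv.1 • W - F).PosSemidef) :
    max 1 (condNum hW / condNum hR) ≤ condNum hF ∧ condNum hF ≤ condNum hR * condNum hW := by
  have : NeZero n := ⟨hn.ne'⟩
  have : NeZero p := ⟨hp.ne'⟩
  have ha := eigMin_pos hR.inv
  have hb := eigMax_pos hR.inv
  have hκ : eigMax hR.inv.1 / eigMin hR.inv.1 = condNum hR := condNum_inv hR
  refine ⟨max_le (one_le_condNum hF) ?_, ?_⟩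
  · rw [div_le_iff₀' (condNum_pos hR), ← hκ, ← inv_div_inv]
    exact condNum_le_of_smul_le_of_le_smul hW hF (inv_pos.2 hb) (inv_pos.2 ha)
      (inv_smul_le_of_le_smul hb hhigh) (le_inv_smul_of_smul_le ha hlow)
  · rw [← hκ]
    exact condNum_le_of_smul_le_of_le_smul hF hW ha hb hlow hhigh
end

section
/- Let n, p ≥ 1, let φ : ℝ × ℝⁿ → ℝⁿ and h : ℝⁿ → ℝᵖ be such that (t, x) ↦ h(φ(t, x)) =: y(t, x) is infinitely differentiable, fix x₀ ∈ ℝⁿ and t₁ > 0, and for ε > 0 let W_ε be the empirical observability Gramian at x₀ over [0, t₁]: (W_ε)_{ij} = (1/(4ε²)) ∫₀^{t₁} (y(t, x₀+εeᵢ) − y(t, x₀−εeᵢ)) · (y(t, x₀+εeⱼ) − y(t, x₀−εeⱼ)) dt. Suppose there exists an n×n matrix W₀ of rank n such that W_ε → W₀ as ε → 0⁺. Then the system is weakly observable at x₀: there exists an open neighborhood U of x₀ such that for every x₁ ∈ U, if y(t, x₁) = y(t, x₀) for all t ≥ 0 then x₁ = x₀. -/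
open Matrix Filter Topology

/-- A square matrix of full rank acts injectively on vectors. -/
theorem Matrix.mulVec_injective_of_rank_eq {n : ℕ} {A : Matrix (Fin n) (Fin n) ℝ}
    (hA : A.rank = n) : Function.Injective A.mulVec := by
  rw [Matrix.mulVec_injective_iff, linearIndependent_iff_card_eq_finrank_span, Fintype.card_fin,
    Set.finrank, ← Matrix.rank_eq_finrank_span_cols, hA]

/-- The symmetric difference quotient of a differentiable function along a line converges to the
derivative in that direction. -/
theorem HasFDerivAt.tendsto_symmetric_slope {E F : Type*} [NormedAddCommGroup E] [NormedSpace ℝ E]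
    [NormedAddCommGroup F] [NormedSpace ℝ F] {f : E → F} {L : E →L[ℝ] F} {x : E}
    (hf : HasFDerivAt f L x) (v : E) :
    Tendsto (fun ε : ℝ => (2 * ε)⁻¹ • (f (x + ε • v) - f (x - ε • v))) (𝓝[>] 0) (𝓝 (L v)) := by
  have hpos : Tendsto (fun ε : ℝ => ε⁻¹ • (f (x + ε • v) - f x)) (𝓝[>] 0) (𝓝 (L v)) := by
    simpa using (hf.hasLineDerivAt v).tendsto_slope_zero_right
  have hneg : Tendsto (fun ε : ℝ => ε⁻¹ • (f (x - ε • v) - f x)) (𝓝[>] 0) (𝓝 (-L v)) := by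
    simpa [sub_eq_add_neg] using (hf.hasLineDerivAt (-v)).tendsto_slope_zero_right
  have key := (hpos.sub hneg).const_smul (2⁻¹ : ℝ)
  have hlim : (2⁻¹ : ℝ) • (L v - -L v) = L v := by
    rw [sub_neg_eq_add, ← two_smul ℝ (L v), smul_smul]
    norm_num
  rw [hlim] at key
  refine key.congr fun ε => ?_
  rw [← smul_sub, sub_sub_sub_cancel_right, smul_smul, mul_inv]

/-- If the derivatives at `x` of a family of functions have no common nonzero kernel vector, then
`x` is isolated in its joint level set. -/
theorem exists_isOpen_forall_eq_of_fderiv_injective {ι E F : Type*} [NormedAddCommGroup E]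
    [NormedSpace ℝ E] [ProperSpace E] [NormedAddCommGroup F] [NormedSpace ℝ F]
    {f : ι → E → F} {L : ι → E →L[ℝ] F} {x : E} (hf : ∀ i, HasFDerivAt (f i) (L i) x)
    (hL : ∀ v, (∀ i, L i v = 0) → v = 0) :
    ∃ U : Set E, IsOpen U ∧ x ∈ U ∧ ∀ z ∈ U, (∀ i, f i z = f i x) → z = x := by
  by_contra! hU
  set S : Set E := {z | ∀ i, f i z = f i x}
  have hacc : AccPt x (𝓟 S) := by
    refine accPt_iff_nhds.2 fun V hV => ?_
    obtain ⟨U, hUV, hUo, hxU⟩ := mem_nhds_iff.1 hV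
    obtain ⟨z, hz, hzS, hne⟩ := hU U hUo hxU
    exact ⟨z, ⟨hUV hz, hzS⟩, hne⟩
  obtain ⟨v, hv, hv0⟩ := tangentConeAt_nonempty_of_properSpace (𝕜 := ℝ) hacc
  refine hv0 (hL v fun i => ?_)
  have hconst : HasFDerivWithinAt (f i) (0 : E →L[ℝ] F) S x :=
    (hasFDerivWithinAt_const (f i x) x S).congr (fun z hz => hz i) rfl
  exact (hf i).hasFDerivWithinAt.unique_on hconst hv

/-- The pairings of symmetric difference quotients of a `C¹` parametrised map, integrated over
the parameter, converge to the integrated pairing of the directional derivatives. -/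
theorem tendsto_integral_dotProduct_symmetric_slope {n p : ℕ}
    {y : ℝ → (Fin n → ℝ) → (Fin p → ℝ)}
    (hy : ContDiff ℝ 1 fun q : ℝ × (Fin n → ℝ) => y q.1 q.2)
    {D : ℝ → (Fin n → ℝ) →L[ℝ] (Fin p → ℝ)} {x : Fin n → ℝ}
    (hD : ∀ t, HasFDerivAt (y t) (D t) x) (a b : ℝ) (v w : Fin n → ℝ) :
    Tendsto (fun ε : ℝ => (1 / (4 * ε ^ 2)) * ∫ t in a..b,
        (y t (x + ε • v) - y t (x - ε • v)) ⬝ᵥ (y t (x + ε • w) - y t (x - ε • w)))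
      (𝓝[>] 0) (𝓝 (∫ t in a..b, D t v ⬝ᵥ D t w)) := by
  set Q : (Fin n → ℝ) → ℝ → ℝ → (Fin p → ℝ) :=
    fun u ε t => (2 * ε)⁻¹ • (y t (x + ε • u) - y t (x - ε • u))
  have hQ : ∀ ε : ℝ, (1 / (4 * ε ^ 2)) * ∫ t in a..b,
      (y t (x + ε • v) - y t (x - ε • v)) ⬝ᵥ (y t (x + ε • w) - y t (x - ε • w)) =
      ∫ t in a..b, Q v ε t ⬝ᵥ Q w ε t := fun ε => by
    rw [← intervalIntegral.integral_const_mul]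
    refine intervalIntegral.integral_congr fun t _ => ?_
    simp only [Q, smul_dotProduct, dotProduct_smul, smul_eq_mul, ← mul_assoc]
    congr 1
    rw [← mul_inv, one_div]
    ring_nf
  simp only [hQ]
  have hycont (u : Fin n → ℝ) : Continuous fun t => y t u :=
    hy.continuous.comp (continuous_id.prodMk continuous_const)
  have hQcont (u : Fin n → ℝ) (ε : ℝ) : Continuous (Q u ε) :=
    ((hycont (x + ε • u)).sub (hycont (x - ε • u))).const_smul (2 * ε)⁻¹
  obtain ⟨K, hK⟩ := hy.contDiffOn.exists_lipschitzOnWith one_ne_zero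
    ((convex_uIcc a b).prod (convex_closedBall x 1)) (isCompact_uIcc.prod (isCompact_closedBall x 1))
  have hbound (u : Fin n → ℝ) : ∀ᶠ ε : ℝ in 𝓝[>] 0, ∀ t ∈ Set.uIcc a b, ‖Q u ε t‖ ≤ K * ‖u‖ := by
    have hsmall : ∀ᶠ ε : ℝ in 𝓝[>] 0, ‖ε • u‖ < 1 := by
      have hcont : Continuous fun ε : ℝ => ‖ε • u‖ := by fun_prop
      exact nhdsWithin_le_nhds (hcont.continuousAt.eventually_lt continuousAt_const (by simp))
    filter_upwards [hsmall, self_mem_nhdsWithin] with ε hε hpos t ht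
    have hpos' : 0 < ε := hpos
    have hlip := hK.norm_sub_le (x := (t, x + ε • u)) (y := (t, x - ε • u))
      ⟨ht, by simpa using hε.le⟩ ⟨ht, by simpa [sub_eq_add_neg] using hε.le⟩
    have hdiff : ‖((t, x + ε • u) : ℝ × (Fin n → ℝ)) - (t, x - ε • u)‖ = 2 * ε * ‖u‖ := by
      have hsub : x + ε • u - (x - ε • u) = (2 * ε) • u := by module
      rw [Prod.mk_sub_mk, sub_self, Prod.norm_mk, norm_zero, hsub, norm_smul,
        Real.norm_of_nonneg (by positivity), max_eq_right (by positivity)]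
    rw [hdiff] at hlip
    rw [norm_smul, Real.norm_of_nonneg (by positivity), inv_mul_le_iff₀ (by positivity)]
    linarith
  have hdot (c d : Fin p → ℝ) : ‖c ⬝ᵥ d‖ ≤ p * (‖c‖ * ‖d‖) := by
    refine (norm_sum_le _ _).trans ((Finset.sum_le_card_nsmul _ _ (‖c‖ * ‖d‖) fun i _ => ?_).trans
      (by simp))
    rw [norm_mul]
    exact mul_le_mul (norm_le_pi_norm c i) (norm_le_pi_norm d i) (norm_nonneg _) (norm_nonneg _)
  refine intervalIntegral.tendsto_integral_filter_of_dominated_convergence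
    (fun _ => p * ((K * ‖v‖) * (K * ‖w‖)))
    (.of_forall fun ε => ((hQcont v ε).dotProduct (hQcont w ε)).aestronglyMeasurable) ?_
    intervalIntegrable_const (.of_forall fun t _ => ?_)
  · filter_upwards [hbound v, hbound w] with ε hv hw
    refine .of_forall fun t ht => (hdot _ _).trans ?_
    have ht' := Set.uIoc_subset_uIcc ht
    gcongr
    exacts [hv t ht', hw t ht']
  · have hcont : Continuous fun q : (Fin p → ℝ) × (Fin p → ℝ) => q.1 ⬝ᵥ q.2 :=
      continuous_fst.dotProduct continuous_snd
    exact (hcont.tendsto (D t v, D t w)).comp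
      (((hD t).tendsto_symmetric_slope v).prodMk_nhds ((hD t).tendsto_symmetric_slope w))

/-- (Theorem `weakobsv`.)  If the empirical observability Gramian of a smooth
output map `y(t,x) = h(φ(t,x))` at `x₀` over `[0,t₁]` converges, as `ε → 0⁺`, to a matrix `W₀`
of full rank `n`, then the system is weakly observable at `x₀`: some open neighborhood of `x₀`
contains no point other than `x₀` that is indistinguishable from `x₀`. -/
theorem weak_observability_of_limit_gramian_full_rank
    {n p : ℕ} (hn : 0 < n) (hp : 0 < p)
    (φ : ℝ → (Fin n → ℝ) → (Fin n → ℝ)) (h : (Fin n → ℝ) → (Fin p → ℝ))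
    (y : ℝ → (Fin n → ℝ) → (Fin p → ℝ)) (hy : y = fun t x => h (φ t x))
    (hsmooth : ContDiff ℝ (⊤ : ℕ∞) fun q : ℝ × (Fin n → ℝ) => y q.1 q.2)
    (x₀ : Fin n → ℝ) (t₁ : ℝ) (ht₁ : 0 < t₁)
    (W : ℝ → Matrix (Fin n) (Fin n) ℝ)
    (hW : W = fun ε => Matrix.of fun i j =>
      (1 / (4 * ε ^ 2)) *
        ∫ t in (0:ℝ)..t₁,
          (y t (x₀ + ε • (Pi.single i 1 : Fin n → ℝ)) -
              y t (x₀ - ε • (Pi.single i 1 : Fin n → ℝ))) ⬝ᵥ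
            (y t (x₀ + ε • (Pi.single j 1 : Fin n → ℝ)) -
              y t (x₀ - ε • (Pi.single j 1 : Fin n → ℝ))))
    (W₀ : Matrix (Fin n) (Fin n) ℝ) (hrank : W₀.rank = n)
    (hlim : Filter.Tendsto W (nhdsWithin 0 (Set.Ioi 0)) (nhds W₀)) :
    ∃ U : Set (Fin n → ℝ), IsOpen U ∧ x₀ ∈ U ∧
      ∀ x₁ ∈ U, (∀ t : ℝ, 0 ≤ t → y t x₁ = y t x₀) → x₁ = x₀ := by
  have hC1 : ContDiff ℝ 1 fun q : ℝ × (Fin n → ℝ) => y q.1 q.2 := hsmooth.of_le (by simp)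
  set D : ℝ → (Fin n → ℝ) →L[ℝ] (Fin p → ℝ) := fun t =>
    (fderiv ℝ (fun q : ℝ × (Fin n → ℝ) => y q.1 q.2) (t, x₀)).comp (.inr ℝ ℝ (Fin n → ℝ))
  have hD (t : ℝ) : HasFDerivAt (y t) (D t) x₀ :=
    ((hC1.differentiable one_ne_zero (t, x₀)).hasFDerivAt).comp x₀ (hasFDerivAt_prodMk_right t x₀)
  have hDcont (v : Fin n → ℝ) : Continuous fun t => D t v :=
    ((hC1.continuous_fderiv one_ne_zero).comp
      (continuous_id.prodMk continuous_const)).clm_apply continuous_const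
  have hW₀ (i j : Fin n) :
      W₀ i j = ∫ t in (0 : ℝ)..t₁, D t (Pi.single i 1) ⬝ᵥ D t (Pi.single j 1) := by
    have hentry := ((continuous_id.matrix_elem i j).tendsto W₀).comp hlim
    refine tendsto_nhds_unique hentry ?_
    simpa [Function.comp_def, hW] using
      tendsto_integral_dotProduct_symmetric_slope hC1 hD 0 t₁ (Pi.single i 1) (Pi.single j 1)
  have hker (v : Fin n → ℝ) (hv : ∀ t : Set.Ici (0 : ℝ), D t v = 0) : v = 0 := by
    refine Matrix.mulVec_injective_of_rank_eq hrank ?_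
    rw [Matrix.mulVec_zero]
    ext i
    have hsum (t : ℝ) : ∑ j, (D t (Pi.single i 1) ⬝ᵥ D t (Pi.single j 1)) * v j =
        D t (Pi.single i 1) ⬝ᵥ D t v := by
      conv_rhs => rw [pi_eq_sum_univ' v]
      simp [map_sum, dotProduct_sum, dotProduct_smul, mul_comm]
    calc (W₀ *ᵥ v) i
        = ∑ j, ∫ t in (0 : ℝ)..t₁, (D t (Pi.single i 1) ⬝ᵥ D t (Pi.single j 1)) * v j := by
          simp only [Matrix.mulVec, dotProduct, hW₀, intervalIntegral.integral_mul_const]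
      _ = ∫ t in (0 : ℝ)..t₁, D t (Pi.single i 1) ⬝ᵥ D t v := by
          simp only [← hsum]
          exact (intervalIntegral.integral_finsetSum fun j _ =>
            (((hDcont _).dotProduct (hDcont _)).mul continuous_const).intervalIntegrable _ _).symm
      _ = ∫ t in (0 : ℝ)..t₁, (0 : ℝ) := by
          refine intervalIntegral.integral_congr fun t ht => ?_
          rw [Set.uIcc_of_le ht₁.le] at ht
          simp [hv ⟨t, ht.1⟩]
      _ = 0 := by simp
  obtain ⟨U, hUo, hxU, hU⟩ :=
    exists_isOpen_forall_eq_of_fderiv_injective (fun t : Set.Ici (0 : ℝ) => hD t) hker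
  exact ⟨U, hUo, hxU, fun z hz hzt => hU z hz fun t => hzt t t.2⟩
end

section
/- Let n, p ≥ 1, let φ : ℝ × ℝⁿ → ℝⁿ and h : ℝⁿ → ℝᵖ be such that (t, x) ↦ h(φ(t, x)) =: y(t, x) is infinitely differentiable, fix x₀ ∈ ℝⁿ, t₁ > 0 and ε > 0, and let W_ε be the empirical observability Gramian at x₀ over [0, t₁] with entries (W_ε)_{ij} = (1/(4ε²)) ∫₀^{t₁} (y(t, x₀+εeᵢ) − y(t, x₀−εeᵢ)) · (y(t, x₀+εeⱼ) − y(t, x₀−εeⱼ)) dt. For each t, let Γ(t) = max_i sup_{η ∈ [x₀−εeᵢ, x₀+εeᵢ]} ‖D³_x y(t, η)(eᵢ, eᵢ, eᵢ)‖₁, where D³_x y(t, η) is the third Fréchet derivative of x ↦ y(t, x) at η and ‖·‖₁ the 1-norm on ℝᵖ, and let ‖D_x y(t, x₀)‖₂ be the operator 2-norm of the Jacobian of x ↦ y(t, x) at x₀. If the smallest singular value of W_ε satisfies σ_min(W_ε) > sup_{t ∈ [0, t₁]} ( (√n ε² t₁ / 3) ‖D_x y(t, x₀)‖₂ Γ(t)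 + (n ε⁴ t₁ / 36) Γ(t)² ), then the system is weakly observable at x₀: there exists an open neighborhood U of x₀ such that for every x₁ ∈ U, if y(t, x₁) = y(t, x₀) for all t ≥ 0 then x₁ = x₀. -/
open Matrix
open scoped RealInnerProductSpace

/-- A fundamental-theorem bound: a function vanishing at `0` whose derivative is `O(s ^ k)` on
`[0, b]` is `O(s ^ (k + 1))` there, with the constant divided by `k + 1`. -/
lemma norm_le_pow_succ_of_norm_deriv_le_pow {F : Type*} [NormedAddCommGroup F] [NormedSpace ℝ F]
    {G G' : ℝ → F} {b c : ℝ} {k : ℕ} (hG : ∀ s, HasDerivAt G (G' s) s) (h0 : G 0 = 0)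
    (hbound : ∀ s ∈ Set.Icc 0 b, ‖G' s‖ ≤ c * s ^ k) :
    ∀ s ∈ Set.Icc 0 b, ‖G s‖ ≤ c / (k + 1) * s ^ (k + 1) := by
  intro s hs
  refine image_norm_le_of_norm_deriv_right_le_deriv_boundary
    (B := fun s => c / (k + 1) * s ^ (k + 1)) (B' := fun s => c * s ^ k)
    (fun x _ => (hG x).continuousAt.continuousWithinAt)
    (fun x _ => (hG x).hasDerivWithinAt) (by simp [h0]) (fun x => ?_)
    (fun x hx => hbound x ⟨hx.1, hx.2.le⟩) hs
  have hk : (k + 1 : ℝ) ≠ 0 := by positivity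
  refine ((hasDerivAt_pow (k + 1) x).const_mul (c / (k + 1 : ℝ))).congr_deriv ?_
  push_cast
  field_simp

/-- The error of the symmetric difference quotient, for a function with bounded third
derivative. -/
lemma norm_symmetric_difference_sub_le {F : Type*} [NormedAddCommGroup F] [NormedSpace ℝ F]
    {g : ℝ → F} (hg : ContDiff ℝ 3 g) {b M : ℝ} (hb : 0 ≤ b)
    (hM : ∀ s ∈ Set.Icc (-b) b, ‖iteratedDeriv 3 g s‖ ≤ M) :
    ‖g b - g (-b) - (2 * b) • deriv g 0‖ ≤ M / 3 * b ^ 3 := by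
  have hderiv : ∀ m : ℕ, m < 3 → ∀ s,
      HasDerivAt (iteratedDeriv m g) (iteratedDeriv (m + 1) g s) s := by
    intro m hm s
    rw [iteratedDeriv_succ]
    exact ((hg.differentiable_iteratedDeriv m (by exact_mod_cast hm)) s).hasDerivAt
  have hneg : ∀ m : ℕ, m < 3 → ∀ s,
      HasDerivAt (fun s => iteratedDeriv m g (-s)) (-iteratedDeriv (m + 1) g (-s)) s := by
    intro m hm s
    have := (hderiv m hm (-s)).scomp s (hasDerivAt_neg s)
    simpa [Function.comp_def] using this
  have hsecond := norm_le_pow_succ_of_norm_deriv_le_pow (b := b) (c := 2 * M) (k := 0)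
    (fun s => (hderiv 2 (by norm_num) s).sub (hneg 2 (by norm_num) s)) (by simp)
    (fun s hs => by
      have h₁ := hM s ⟨by linarith [hs.1], hs.2⟩
      have h₂ := hM (-s) ⟨by linarith [hs.2], by linarith [hs.1]⟩
      rw [sub_neg_eq_add]
      refine (norm_add_le _ _).trans ?_
      simp only [Nat.reduceAdd, pow_zero, mul_one] at *
      linarith)
  have hfirst := norm_le_pow_succ_of_norm_deriv_le_pow (b := b) (c := 2 * M) (k := 1)
    (fun s => ((hderiv 1 (by norm_num) s).add (hneg 1 (by norm_num) s)).sub_const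
      ((2 : ℝ) • deriv g 0)) (by simp [two_smul])
    (fun s hs => by simpa [← sub_eq_add_neg] using hsecond s hs)
  have hzeroth := norm_le_pow_succ_of_norm_deriv_le_pow (b := b) (c := M) (k := 2)
    (fun s => ((hderiv 0 (by norm_num) s).sub (hneg 0 (by norm_num) s)).sub
      (((hasDerivAt_id s).const_mul (2 : ℝ)).smul_const (deriv g 0))) (by simp)
    (fun s hs => by
      have := hfirst s hs
      norm_num at this
      simpa using this)
  have := hzeroth b ⟨hb, le_rfl⟩
  norm_num at this
  simpa using this

/-- Iterated derivatives of the composition with an affine map. -/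
lemma iteratedFDeriv_comp_add_clm {E F G : Type*} [NormedAddCommGroup E] [NormedSpace ℝ E]
    [NormedAddCommGroup F] [NormedSpace ℝ F] [NormedAddCommGroup G] [NormedSpace ℝ G]
    {f : E → F} {k : ℕ} (hf : ContDiff ℝ k f) (a : E) (L : G →L[ℝ] E) (z : G) (m : Fin k → G) :
    iteratedFDeriv ℝ k (fun z => f (a + L z)) z m =
      iteratedFDeriv ℝ k f (a + L z) (fun i => L (m i)) := by
  have h := L.iteratedFDeriv_comp_right (f := fun w => f (a + w)) (n := k)
    (hf.comp (contDiff_const.add contDiff_id)) z le_rfl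
  rw [iteratedFDeriv_comp_add_left] at h
  simpa [Function.comp_def] using congrArg (fun T => T m) h

/-- The smallest eigenvalue of a real symmetric matrix bounds its quadratic form below. -/
lemma iInf_eigenvalues_mul_norm_sq_le {ι : Type*} [Fintype ι] [DecidableEq ι]
    {A : Matrix ι ι ℝ} (hA : A.IsHermitian) (v : EuclideanSpace ℝ ι) :
    (⨅ i, hA.eigenvalues i) * ‖v‖ ^ 2 ≤ v.ofLp ⬝ᵥ A *ᵥ v.ofLp := by
  have hsymm : (toEuclideanLin A).IsSymmetric := isSymmetric_toEuclideanLin_iff.mpr hA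
  have hquad : v.ofLp ⬝ᵥ A *ᵥ v.ofLp = ⟪v, toEuclideanLin A v⟫ := by
    simp [EuclideanSpace.inner_eq_star_dotProduct, dotProduct_comm]
  have happly : ∀ i, toEuclideanLin A (hA.eigenvectorBasis i) =
      hA.eigenvalues i • hA.eigenvectorBasis i := by
    intro i
    ext j
    have := congrFun (hA.mulVec_eigenvectorBasis i) j
    simpa using this
  rw [hquad, ← hA.eigenvectorBasis.sum_inner_mul_inner, ← real_inner_self_eq_norm_sq,
    ← hA.eigenvectorBasis.sum_inner_mul_inner v v, Finset.mul_sum]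
  refine Finset.sum_le_sum fun i _ => ?_
  rw [← hsymm, happly, real_inner_smul_left, real_inner_comm v]
  have := ciInf_le (Set.finite_range hA.eigenvalues).bddBelow i
  nlinarith [mul_le_mul_of_nonneg_right this (mul_self_nonneg ⟪v, hA.eigenvectorBasis i⟫)]

/-- The quadratic form of a Gramian matrix of continuous curves. -/
lemma dotProduct_gramian_mulVec {ι F : Type*} [Fintype ι] [NormedAddCommGroup F]
    [InnerProductSpace ℝ F] {d : ι → ℝ → F} (hd : ∀ i, Continuous (d i)) (c a b : ℝ)
    (v : ι → ℝ) :
    v ⬝ᵥ (Matrix.of fun i j => c * ∫ t in a..b, ⟪d i t, d j t⟫) *ᵥ v =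
      c * ∫ t in a..b, ‖∑ i, v i • d i t‖ ^ 2 := by
  have hint : ∀ i j, IntervalIntegrable (fun t => ⟪d i t, d j t⟫) MeasureTheory.volume a b :=
    fun i j => ((hd i).inner (hd j)).intervalIntegrable _ _
  have hexpand : ∀ t, ‖∑ i, v i • d i t‖ ^ 2 = ∑ i, ∑ j, v i * v j * ⟪d i t, d j t⟫ := by
    intro t
    rw [← real_inner_self_eq_norm_sq, sum_inner]
    refine Finset.sum_congr rfl fun i _ => ?_
    rw [inner_sum]
    refine Finset.sum_congr rfl fun j _ => ?_
    rw [real_inner_smul_left, real_inner_smul_right, mul_assoc]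
  simp only [hexpand]
  rw [intervalIntegral.integral_finsetSum
    (fun i _ => (continuous_finsetSum _ fun j _ =>
      ((hd i).inner (hd j)).const_mul _).intervalIntegrable _ _), Finset.mul_sum]
  simp only [dotProduct, mulVec, Matrix.of_apply]
  refine Finset.sum_congr rfl fun i _ => ?_
  rw [intervalIntegral.integral_finsetSum (fun j _ => (hint i j).const_mul _), Finset.mul_sum,
    Finset.mul_sum]
  refine Finset.sum_congr rfl fun j _ => ?_
  rw [intervalIntegral.integral_const_mul]
  ring

/-- If the derivatives at `x₀` of a family of maps have no common kernel vector, then the family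
separates `x₀` from all nearby points. -/
lemma eventually_exists_ne_of_hasFDerivAt {ι E F : Type*} [NormedAddCommGroup E]
    [NormedSpace ℝ E] [FiniteDimensional ℝ E] [NormedAddCommGroup F] [NormedSpace ℝ F]
    {f : ι → E → F} {f' : ι → E →L[ℝ] F} {x₀ : E} (hf : ∀ i, HasFDerivAt (f i) (f' i) x₀)
    (hker : ∀ v, (∀ i, f' i v = 0) → v = 0) :
    ∀ᶠ x in nhdsWithin x₀ {x₀}ᶜ, ∃ i, f i x ≠ f i x₀ := by
  classical
  obtain ⟨_, ⟨s, rfl⟩, hs⟩ := IsArtinian.set_has_minimal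
    (Set.range fun s : Finset ι => s.inf fun i => LinearMap.ker (f' i : E →ₗ[ℝ] F))
    (Set.range_nonempty _)
  have hinj : (ContinuousLinearMap.pi fun i : s => f' i).ker = ⊥ := by
    refine (Submodule.eq_bot_iff _).2 fun v hv => hker v fun i => ?_
    by_contra hi
    refine hs _ ⟨insert i s, rfl⟩ (lt_of_le_of_ne (Finset.inf_mono (Finset.subset_insert i s))
      fun heq => hi ?_)
    have hvs : v ∈ s.inf fun i => LinearMap.ker (f' i : E →ₗ[ℝ] F) := by
      rw [Submodule.mem_finsetInf]
      intro j hj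
      exact congrFun (LinearMap.mem_ker.1 hv) ⟨j, hj⟩
    simp only at heq
    rw [← heq, Submodule.mem_finsetInf] at hvs
    exact hvs i (Finset.mem_insert_self i s)
  obtain ⟨K, -, hK⟩ := (ContinuousLinearMap.pi fun i : s => f' i).exists_antilipschitzWith hinj
  have hpi : HasFDerivAt (fun x (i : s) => f i x) (ContinuousLinearMap.pi fun i : s => f' i) x₀ :=
    hasFDerivAt_pi.2 fun i => hf i
  filter_upwards [hpi.eventually_ne ⟨K, hK⟩ (c := fun i : s => f i x₀)] with x hx
  obtain ⟨i, hi⟩ := Function.ne_iff.1 hx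
  exact ⟨i, hi⟩

/-- Bound on a linear combination of vectors of bounded norm. -/
lemma norm_sum_smul_sq_le {ι F : Type*} [Fintype ι] [NormedAddCommGroup F] [NormedSpace ℝ F]
    (v : EuclideanSpace ℝ ι) {r : ι → F} {C : ℝ} (hr : ∀ i, ‖r i‖ ≤ C) :
    ‖∑ i, v i • r i‖ ^ 2 ≤ Fintype.card ι * C ^ 2 * ‖v‖ ^ 2 := by
  have hsum : ‖∑ i, v i • r i‖ ≤ ∑ i, |v i| * C := by
    refine (norm_sum_le _ _).trans (Finset.sum_le_sum fun i _ => ?_)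
    rw [norm_smul, Real.norm_eq_abs]
    exact mul_le_mul_of_nonneg_left (hr i) (abs_nonneg _)
  calc ‖∑ i, v i • r i‖ ^ 2 ≤ (∑ i, |v i| * C) ^ 2 := by gcongr
    _ = (∑ i, |v i|) ^ 2 * C ^ 2 := by rw [← Finset.sum_mul, mul_pow]
    _ ≤ (Fintype.card ι * ∑ i, |v i| ^ 2) * C ^ 2 := by
        gcongr
        exact sq_sum_le_card_mul_sum_sq
    _ = Fintype.card ι * C ^ 2 * ‖v‖ ^ 2 := by
        rw [EuclideanSpace.norm_sq_eq]
        simp only [Real.norm_eq_abs]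
        ring

/-- (Theorem `empweakobsv`.)  If the smallest singular value (= smallest
eigenvalue, the Gramian being symmetric positive semidefinite) of the finite-`ε` empirical
observability Gramian exceeds
`sup_{t∈[0,t₁]} ((√n ε² t₁/3)‖D_x y(t,x₀)‖₂ Γ(t) + (n ε⁴ t₁/36) Γ(t)²)`,
where `Γ(t) = max_i sup_{η∈[x₀−εeᵢ, x₀+εeᵢ]} ‖D³_x y(t,η)(eᵢ,eᵢ,eᵢ)‖₁`, then the system is
weakly observable at `x₀`. -/
theorem weak_observability_of_gramian_min_singular_value_bound
    {n p : ℕ} (hn : 0 < n) (hp : 0 < p)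
    (φ : ℝ → EuclideanSpace ℝ (Fin n) → EuclideanSpace ℝ (Fin n))
    (h : EuclideanSpace ℝ (Fin n) → EuclideanSpace ℝ (Fin p))
    (y : ℝ → EuclideanSpace ℝ (Fin n) → EuclideanSpace ℝ (Fin p))
    (hy : y = fun t x => h (φ t x))
    (hsmooth : ContDiff ℝ (⊤ : ℕ∞) fun q : ℝ × EuclideanSpace ℝ (Fin n) => y q.1 q.2)
    (x₀ : EuclideanSpace ℝ (Fin n)) (t₁ ε : ℝ) (ht₁ : 0 < t₁) (hε : 0 < ε)
    (W : Matrix (Fin n) (Fin n) ℝ)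
    (hW : W = Matrix.of fun i j =>
      (1 / (4 * ε ^ 2)) *
        ∫ t in (0:ℝ)..t₁,
          ⟪y t (x₀ + ε • EuclideanSpace.single i (1:ℝ)) -
              y t (x₀ - ε • EuclideanSpace.single i (1:ℝ)),
            y t (x₀ + ε • EuclideanSpace.single j (1:ℝ)) -
              y t (x₀ - ε • EuclideanSpace.single j (1:ℝ))⟫)
    (Γ : ℝ → ℝ)
    (hΓ : Γ = fun t => ⨆ i : Fin n,
      ⨆ η : segment ℝ (x₀ - ε • EuclideanSpace.single i (1:ℝ))
          (x₀ + ε • EuclideanSpace.single i (1:ℝ)),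
        ∑ k, |iteratedFDeriv ℝ 3 (fun x => y t x) (η : EuclideanSpace ℝ (Fin n))
          (fun _ : Fin 3 => EuclideanSpace.single i (1:ℝ)) k|)
    (hherm : W.IsHermitian)
    (hgap : (⨆ t : Set.Icc (0:ℝ) t₁,
        ((Real.sqrt n * ε ^ 2 * t₁ / 3) * ‖fderiv ℝ (fun x => y (t : ℝ) x) x₀‖ * Γ t +
          ((n : ℝ) * ε ^ 4 * t₁ / 36) * Γ t ^ 2)) < ⨅ i, hherm.eigenvalues i) :
    ∃ U : Set (EuclideanSpace ℝ (Fin n)), IsOpen U ∧ x₀ ∈ U ∧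
      ∀ x₁ ∈ U, (∀ t : ℝ, 0 ≤ t → y t x₁ = y t x₀) → x₁ = x₀ := by
  set e : Fin n → EuclideanSpace ℝ (Fin n) := fun i => EuclideanSpace.single i (1 : ℝ) with he
  set third : Fin n → ℝ → EuclideanSpace ℝ (Fin n) → ℝ := fun i t x =>
    ∑ k, |iteratedFDeriv ℝ 3 (fun x => y t x) x (fun _ : Fin 3 => e i) k| with hthird
  have hsegment : ∀ i, ∀ s ∈ Set.Icc (-ε) ε,
      x₀ + s • e i ∈ segment ℝ (x₀ - ε • e i) (x₀ + ε • e i) := by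
    intro i s hs
    rw [segment_eq_image']
    refine ⟨(s + ε) / (2 * ε), ⟨by have := hs.1; apply div_nonneg <;> linarith,
      by rw [div_le_one (by positivity)]; linarith [hs.2]⟩, ?_⟩
    have : x₀ + ε • e i - (x₀ - ε • e i) = (2 * ε) • e i := by module
    simp only [this, smul_smul, div_mul_cancel₀ _ (show 2 * ε ≠ 0 by positivity)]
    module
  have hslice : ∀ t, ContDiff ℝ (⊤ : ℕ∞) (y t) := fun t =>
    hsmooth.comp (contDiff_const.prodMk contDiff_id)
  have hsmooth₃ := contDiff_infty.1 hsmooth 3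
  have hslice₃ := fun t => contDiff_infty.1 (hslice t) 3
  have hdiff : ∀ t, HasFDerivAt (y t) (fderiv ℝ (y t) x₀) x₀ := fun t =>
    ((hslice t).differentiable (by simp) x₀).hasFDerivAt
  have hfderiv_cont : Continuous fun t => fderiv ℝ (y t) x₀ :=
    (ContDiff.fderiv (m := 1) (n := 0) (f := y) (g := fun _ => x₀)
      (hsmooth.of_le (by exact_mod_cast le_top)) contDiff_const (zero_add _).le).continuous
  have hthird_cont : ∀ i, Continuous fun q : ℝ × EuclideanSpace ℝ (Fin n) => third i q.1 q.2 := by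
    intro i
    have hpartial : ∀ q : ℝ × EuclideanSpace ℝ (Fin n),
        iteratedFDeriv ℝ 3 (fun x => y q.1 x) q.2 (fun _ : Fin 3 => e i) =
          iteratedFDeriv ℝ 3 (fun q : ℝ × EuclideanSpace ℝ (Fin n) => y q.1 q.2) q
            (fun _ : Fin 3 => ((0 : ℝ), e i)) := by
      intro q
      have := iteratedFDeriv_comp_add_clm (k := 3) hsmooth₃ (q.1, (0 : EuclideanSpace ℝ (Fin n)))
        (ContinuousLinearMap.inr ℝ ℝ (EuclideanSpace ℝ (Fin n))) q.2 (fun _ => e i)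
      simpa using this
    simp only [hthird, hpartial]
    have hc := hsmooth₃.continuous_iteratedFDeriv (m := 3) le_rfl
    fun_prop
  have hbound : ∃ C, ∀ t ∈ Set.Icc 0 t₁, ∀ i,
      ∀ η ∈ segment ℝ (x₀ - ε • e i) (x₀ + ε • e i), third i t η ≤ C := by
    have hcompact : ∀ i, ∃ C, ∀ t ∈ Set.Icc 0 t₁,
        ∀ η ∈ segment ℝ (x₀ - ε • e i) (x₀ + ε • e i), third i t η ≤ C := by
      intro i
      have hK : IsCompact (segment ℝ (x₀ - ε • e i) (x₀ + ε • e i)) := by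
        rw [segment_eq_image']
        exact isCompact_Icc.image (by fun_prop)
      obtain ⟨C, hC⟩ := ((isCompact_Icc (a := 0) (b := t₁)).prod hK).bddAbove_image
        (hthird_cont i).continuousOn
      exact ⟨C, fun t ht η hη => hC ⟨(t, η), ⟨ht, hη⟩, rfl⟩⟩
    choose C hC using hcompact
    obtain ⟨B, hB⟩ := (Set.finite_range C).bddAbove
    exact ⟨B, fun t ht i η hη => (hC i t ht η hη).trans (hB ⟨i, rfl⟩)⟩
  obtain ⟨C, hC⟩ := hbound
  have hΓ_ge : ∀ t ∈ Set.Icc 0 t₁, ∀ i,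
      ∀ η ∈ segment ℝ (x₀ - ε • e i) (x₀ + ε • e i), third i t η ≤ Γ t := by
    intro t ht i η hη
    rw [hΓ]
    have hinner : BddAbove (Set.range fun η : segment ℝ (x₀ - ε • e i) (x₀ + ε • e i) =>
        third i t η) := ⟨C, by rintro _ ⟨η, rfl⟩; exact hC t ht i η η.2⟩
    exact (le_ciSup hinner ⟨η, hη⟩).trans
      (le_ciSup (f := fun i => ⨆ η : segment ℝ (x₀ - ε • e i) (x₀ + ε • e i), third i t η)
        (Set.finite_range _).bddAbove i)
  have hΓ_nonneg : ∀ t, 0 ≤ Γ t := by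
    intro t
    rw [hΓ]
    exact Real.iSup_nonneg fun i => Real.iSup_nonneg fun η =>
      Finset.sum_nonneg fun k _ => abs_nonneg _
  have hΓ_le : ∀ t ∈ Set.Icc 0 t₁, Γ t ≤ C := by
    intro t ht
    rw [hΓ]
    have : Nonempty (Fin n) := ⟨⟨0, hn⟩⟩
    refine ciSup_le fun i => ?_
    have : Nonempty (segment ℝ (x₀ - ε • e i) (x₀ + ε • e i)) :=
      ⟨⟨_, left_mem_segment ℝ _ _⟩⟩
    exact ciSup_le fun η => hC t ht i η η.2
  set S := ⨆ t : Set.Icc (0:ℝ) t₁,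
    ((Real.sqrt n * ε ^ 2 * t₁ / 3) * ‖fderiv ℝ (fun x => y (t : ℝ) x) x₀‖ * Γ t +
      ((n : ℝ) * ε ^ 4 * t₁ / 36) * Γ t ^ 2)
  have hS_ge : ∀ t ∈ Set.Icc 0 t₁, (n : ℝ) * ε ^ 4 * t₁ / 36 * Γ t ^ 2 ≤ S := by
    intro t ht
    obtain ⟨D, hD⟩ := (isCompact_Icc (a := 0) (b := t₁)).bddAbove_image
      (f := fun t => ‖fderiv ℝ (y t) x₀‖) hfderiv_cont.norm.continuousOn
    have hbdd : BddAbove (Set.range fun t : Set.Icc (0:ℝ) t₁ =>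
        (Real.sqrt n * ε ^ 2 * t₁ / 3) * ‖fderiv ℝ (fun x => y (t : ℝ) x) x₀‖ * Γ t +
          ((n : ℝ) * ε ^ 4 * t₁ / 36) * Γ t ^ 2) := by
      refine ⟨(Real.sqrt n * ε ^ 2 * t₁ / 3) * D * C + ((n : ℝ) * ε ^ 4 * t₁ / 36) * C ^ 2, ?_⟩
      rintro _ ⟨s, rfl⟩
      have h₁ : ‖fderiv ℝ (fun x => y (s : ℝ) x) x₀‖ ≤ D := hD ⟨s, s.2, rfl⟩
      have h₂ := hΓ_le s s.2
      have h₃ := hΓ_nonneg s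
      have h₄ : 0 ≤ D := (norm_nonneg _).trans h₁
      dsimp only
      gcongr
    refine le_trans ?_ (le_ciSup hbdd ⟨t, ht⟩)
    have := hΓ_nonneg t
    exact le_add_of_nonneg_left (by positivity)
  have hdifference : ∀ t ∈ Set.Icc 0 t₁, ∀ i,
      ‖y t (x₀ + ε • e i) - y t (x₀ - ε • e i) - (2 * ε) • fderiv ℝ (y t) x₀ (e i)‖ ≤
        Γ t / 3 * ε ^ 3 := by
    intro t ht i
    have hline : ContDiff ℝ 3 fun s : ℝ => y t (x₀ + s • e i) :=
      (hslice₃ t).comp (contDiff_const.add (contDiff_id.smul contDiff_const))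
    have hderiv : deriv (fun s : ℝ => y t (x₀ + s • e i)) 0 = fderiv ℝ (y t) x₀ (e i) :=
      ((hdiff t).hasLineDerivAt (e i)).lineDeriv
    have := norm_symmetric_difference_sub_le hline hε.le (M := Γ t) fun s hs => by
      have hs' := iteratedFDeriv_comp_add_clm (k := 3) (hslice₃ t) x₀
        (ContinuousLinearMap.toSpanSingleton ℝ (e i)) s (fun _ => 1)
      simp only [ContinuousLinearMap.toSpanSingleton_apply, one_smul] at hs'
      rw [iteratedDeriv_eq_iteratedFDeriv, hs']
      refine le_trans ?_ (hΓ_ge t ht i _ (hsegment i s hs))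
      rw [hthird, EuclideanSpace.norm_eq]
      refine Real.sqrt_le_iff.2 ⟨Finset.sum_nonneg fun k _ => abs_nonneg _, ?_⟩
      simp only [Real.norm_eq_abs]
      exact Finset.sum_sq_le_sq_sum_of_nonneg fun k _ => abs_nonneg _
    rw [hderiv] at this
    simpa [← sub_eq_add_neg] using this
  have hker : ∀ v, (∀ t : Set.Icc (0 : ℝ) t₁, fderiv ℝ (y t) x₀ v = 0) → v = 0 := by
    intro v hv
    by_contra hv0
    have hpos : 0 < ‖v‖ ^ 2 := by positivity
    have hbasis : v = ∑ i, v i • e i := by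
      ext j
      simp [he, Pi.single_apply]
    have hcurve : ∀ i, Continuous fun t => y t (x₀ + ε • e i) - y t (x₀ - ε • e i) := fun i =>
      (hsmooth.continuous.comp (by fun_prop : Continuous fun t : ℝ => (t, x₀ + ε • e i))).sub
        (hsmooth.continuous.comp (by fun_prop : Continuous fun t : ℝ => (t, x₀ - ε • e i)))
    have hpointwise : ∀ t ∈ Set.Icc 0 t₁,
        ‖∑ i, v i • (y t (x₀ + ε • e i) - y t (x₀ - ε • e i))‖ ^ 2 ≤
          4 * ε ^ 2 * (S * ‖v‖ ^ 2) / t₁ := by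
      intro t ht
      have hzero : ∑ i, v i • fderiv ℝ (y t) x₀ (e i) = 0 := by
        rw [← hv ⟨t, ht⟩]
        conv_rhs => rw [hbasis]
        simp
      have hsum : ∑ i, v i • (y t (x₀ + ε • e i) - y t (x₀ - ε • e i)) =
          ∑ i, v i • (y t (x₀ + ε • e i) - y t (x₀ - ε • e i) -
            (2 * ε) • fderiv ℝ (y t) x₀ (e i)) := by
        simp only [smul_sub _ (_ - _), Finset.sum_sub_distrib, smul_comm _ (2 * ε),
          ← Finset.smul_sum, hzero, smul_zero, sub_zero]
      rw [hsum, le_div_iff₀ ht₁]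
      have h₁ := norm_sum_smul_sq_le v (hdifference t ht)
      rw [Fintype.card_fin] at h₁
      calc _ ≤ (n * (Γ t / 3 * ε ^ 3) ^ 2 * ‖v‖ ^ 2) * t₁ := by gcongr
        _ = 4 * ε ^ 2 * ((n : ℝ) * ε ^ 4 * t₁ / 36 * Γ t ^ 2 * ‖v‖ ^ 2) := by ring
        _ ≤ _ := by gcongr; exact hS_ge t ht
    have hquad : v.ofLp ⬝ᵥ W *ᵥ v.ofLp ≤ S * ‖v‖ ^ 2 := by
      rw [hW, dotProduct_gramian_mulVec hcurve]
      have hint := intervalIntegral.integral_mono_on ht₁.le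
        (((continuous_finsetSum _ fun i _ => (hcurve i).const_smul (v i)).norm.pow
          2).intervalIntegrable (μ := MeasureTheory.volume) 0 t₁)
        intervalIntegrable_const hpointwise
      rw [intervalIntegral.integral_const, sub_zero, smul_eq_mul,
        mul_div_cancel₀ _ ht₁.ne'] at hint
      rw [one_div, inv_mul_le_iff₀ (by positivity)]
      exact hint
    have := iInf_eigenvalues_mul_norm_sq_le hherm v
    exact absurd (this.trans hquad) (not_le.2 (mul_lt_mul_of_pos_right hgap hpos))
  have hev := eventually_exists_ne_of_hasFDerivAt
    (f := fun t : Set.Icc (0 : ℝ) t₁ => y t) (fun t => hdiff t) hker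
  rw [eventually_nhdsWithin_iff, eventually_nhds_iff] at hev
  obtain ⟨U, hU, hUo, hxU⟩ := hev
  refine ⟨U, hUo, hxU, fun x₁ hx₁ heq => ?_⟩
  by_contra hne
  obtain ⟨t, ht⟩ := hU x₁ hx₁ hne
  exact ht (heq t t.2.1)
end
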